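/- Let M be a nonempty compact Lipschitz domain in ℝ². Then: (a) each connected component of ∂M is a Jordan curve, i.e. the image of a continuous map γ : [a,b] → ℝ² with γ(a) = γ(b) that is injective on [a,b); (b) if γ : [a,b] → ℝ² is such a Jordan curve parametrizing a connected component of ∂M, then there is a partition a = t₀ < t₁ < ⋯ < t_N = b such that the image of the restriction of γ to [t_i, t_{i+1}] is a Lipschitz graph for every i = 0, …, N−1. -/

import Mathlib

open Set
open scoped RealInnerProductSpace

/-- `M` is an `L`-Lipschitz graph in the direction of a unit vector `v`. -/
def IsLipschitzGraphInDir (L : ℝ) (v : EuclideanSpace ℝ (Fin 2))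
    (M : Set (EuclideanSpace ℝ (Fin 2))) : Prop :=
  ∃ (K : Set (EuclideanSpace ℝ (Fin 2))) (f : EuclideanSpace ℝ (Fin 2) → ℝ),
    IsClosed K ∧ Convex ℝ K ∧ (∀ t ∈ K, ⟪t, v⟫ = 0) ∧
    (∀ s ∈ K, ∀ t ∈ K, |f s - f t| ≤ L * ‖s - t‖) ∧
    M = (fun t => t + f t • v) '' K

/-- `M` is a Lipschitz graph: an `L`-Lipschitz graph in direction `v` for some `L > 0` and
some unit vector `v`. -/
def IsLipschitzGraph (M : Set (EuclideanSpace ℝ (Fin 2))) : Prop :=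
  ∃ L : ℝ, 0 < L ∧ ∃ v : EuclideanSpace ℝ (Fin 2), ‖v‖ = 1 ∧ IsLipschitzGraphInDir L v M

/-- `A ⊆ ℝ²` is a Lipschitz domain: it is nonempty and near every boundary point, after a
rigid motion, it coincides with the subgraph of a Lipschitz function. -/
def IsLipschitzDomain (A : Set (EuclideanSpace ℝ (Fin 2))) : Prop :=
  A.Nonempty ∧ ∀ x ∈ frontier A,
    ∃ (g : EuclideanSpace ℝ (Fin 2) ≃ᵢ EuclideanSpace ℝ (Fin 2)) (r : ℝ) (φ : ℝ → ℝ) (L : ℝ),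
      0 < r ∧ 0 ≤ L ∧ (∀ s t : ℝ, |φ s - φ t| ≤ L * |s - t|) ∧
      (g '' A) ∩ Metric.ball (g x) r
        = {p : EuclideanSpace ℝ (Fin 2) | p 1 ≤ φ (p 0)} ∩ Metric.ball (g x) r

structure ChartFam {E : Type*} [MetricSpace E] (F : Set E) (C : Set (ℝ → E)) : Prop where
  cont : ∀ c ∈ C, Continuous c
  inj : ∀ c ∈ C, Function.Injective c
  mem : ∀ c ∈ C, ∀ u : ℝ, |u| ≤ 2 → c u ∈ F
  ex : ∀ x ∈ F, ∃ c ∈ C, c 0 = x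
  neg : ∀ c ∈ C, (fun u => c (-u)) ∈ C
  rig : ∀ c ∈ C, ∀ d ∈ C, ∀ t : ℝ, |t| ≤ 2 → d 0 = c t →
    (∀ u : ℝ, |u| ≤ 2 → d u = c (t + u)) ∨ (∀ u : ℝ, |u| ≤ 2 → d u = c (t - u))
  nbhd : ∀ c ∈ C, ∃ ε > 0, ∀ y ∈ F, dist y (c 0) < ε → ∃ t : ℝ, |t| ≤ 1 / 2 ∧ y = c t

def GoodCurve {E : Type*} (C : Set (ℝ → E)) (γ : ℝ → E) : Prop :=
  ∀ t : ℝ, ∃ c ∈ C, ∀ u : ℝ, |u| ≤ 1 → γ (t + u) = c u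

section abstractpart
variable {E : Type*} [MetricSpace E] {F : Set E} {C : Set (ℝ → E)}

lemma GoodCurve.shift {γ : ℝ → E} (h : GoodCurve C γ) (s : ℝ) :
    GoodCurve C (fun u => γ (s + u)) := by
  intro t
  obtain ⟨c, hc, H⟩ := h (s + t)
  exact ⟨c, hc, fun u hu => by rw [← H u hu]; ring_nf⟩

lemma GoodCurve.reflect (hC : ChartFam F C) {γ : ℝ → E} (h : GoodCurve C γ) :
    GoodCurve C (fun u => γ (-u)) := by
  intro t
  obtain ⟨c, hc, H⟩ := h (-t)
  refine ⟨_, hC.neg c hc, fun u hu => ?_⟩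
  have := H (-u) (by rwa [abs_neg])
  simp only [← this]; ring_nf

lemma GoodCurve.ext_nonneg (hC : ChartFam F C) {α β : ℝ → E} (ha : GoodCurve C α)
    (hb : GoodCurve C β) (h : ∀ u, 0 ≤ u → u ≤ 1 → α u = β u) : ∀ u, 0 ≤ u → α u = β u := by
  have key : ∀ n : ℕ, ∀ u : ℝ, 0 ≤ u → u ≤ (n : ℝ) + 1 → α u = β u := by
    intro n
    induction n with
    | zero => intro u h0 h1; exact h u h0 (by simpa using h1)
    | succ n ih =>
      intro u h0 h1
      by_cases hu : u ≤ (n : ℝ) + 1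
      · exact ih u h0 hu
      push Not at hu
      push_cast at h1
      have hn : (0 : ℝ) ≤ n := Nat.cast_nonneg n
      set a : ℝ := (n : ℝ) + 1 with hadef
      obtain ⟨c, hc, H⟩ := ha a
      obtain ⟨d, hd, H'⟩ := hb a
      have hc0 : d 0 = c 0 := by
        rw [← H 0 (by simp), ← H' 0 (by simp)]
        simpa using (ih a (by linarith) le_rfl).symm
      rcases hC.rig c hc d hd 0 (by simp) hc0 with R | R
      · have e1 := H (u - a) (by rw [abs_le]; constructor <;> linarith)
        have e2 := H' (u - a) (by rw [abs_le]; constructor <;> linarith)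
        have e3 := R (u - a) (by rw [abs_le]; constructor <;> linarith)
        rw [zero_add] at e3
        rw [add_sub_cancel] at e1 e2
        rw [e1, e2, e3]
      · exfalso
        have e1 := H (-1) (by simp)
        have e2 := H' (-1) (by simp)
        have e3 := R (-1) (by norm_num)
        have e4 := ih (a + -1) (by linarith) (by linarith)
        rw [e1, e2, e3] at e4
        have := hC.inj c hc e4
        norm_num at this
  intro u hu
  obtain ⟨n, hn⟩ := exists_nat_ge u
  exact key n u hu (by linarith)

lemma GoodCurve.ext_all (hC : ChartFam F C) {α β : ℝ → E} (ha : GoodCurve C α)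
    (hb : GoodCurve C β) (h : ∀ u, |u| ≤ 1 → α u = β u) : ∀ u, α u = β u := by
  intro u
  rcases le_total 0 u with hu | hu
  · exact ha.ext_nonneg hC hb (fun u h0 h1 => h u (by rw [abs_le]; constructor <;> linarith)) u hu
  · have := (ha.reflect hC).ext_nonneg hC (hb.reflect hC)
      (fun u h0 h1 => h (-u) (by rw [abs_le]; constructor <;> linarith)) (-u) (by linarith)
    simpa using this

lemma GoodCurve.rigid (hC : ChartFam F C) {α β : ℝ → E} (ha : GoodCurve C α)
    (hb : GoodCurve C β) (h : α 0 = β 0) : (∀ u, α u = β u) ∨ (∀ u, α u = β (-u)) := by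
  obtain ⟨c, hc, H⟩ := ha 0
  obtain ⟨d, hd, H'⟩ := hb 0
  have hc0 : c 0 = d 0 := by
    rw [← H 0 (by simp), ← H' 0 (by simp)]; simpa using h
  rcases hC.rig d hd c hc 0 (by simp) hc0 with R | R
  · left
    refine ha.ext_all hC hb fun u hu => ?_
    have e1 := H u hu
    have e2 := H' u hu
    have e3 := R u (by linarith)
    simp only [zero_add] at e1 e2 e3
    rw [e1, e2, e3]
  · right
    refine ha.ext_all hC (hb.reflect hC) fun u hu => ?_
    have e1 := H u hu
    have e2 := H' (-u) (by rwa [abs_neg])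
    have e3 := R u (by linarith)
    simp only [zero_add, zero_sub] at e1 e2 e3
    rw [e1, e2, e3]

lemma GoodCurve.periodic (hC : ChartFam F C) {γ : ℝ → E} (h : GoodCurve C γ)
    {s t : ℝ} (he : γ s = γ t) : ∀ u, γ (s + u) = γ (t + u) := by
  rcases (h.shift s).rigid hC (h.shift t) (by simpa using he) with R | R
  · exact R
  · exfalso
    obtain ⟨c, hc, H⟩ := h ((s + t) / 2)
    have e1 := H 1 (by simp)
    have e2 := H (-1) (by simp)
    have e3 := R ((t - s) / 2 + 1)
    have e4 : c 1 = c (-1) := by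
      rw [← e1, ← e2]
      convert e3 using 2 <;> ring
    have := hC.inj c hc e4
    norm_num at this

lemma GoodCurve.continuous (hC : ChartFam F C) {γ : ℝ → E} (h : GoodCurve C γ) :
    Continuous γ := by
  rw [continuous_iff_continuousAt]
  intro t
  obtain ⟨c, hc, H⟩ := h t
  have : ContinuousAt (fun x => c (x - t)) t :=
    ((hC.cont c hc).comp (continuous_id.sub continuous_const)).continuousAt
  refine this.congr ?_
  filter_upwards [Metric.ball_mem_nhds t one_pos] with x hx
  have := H (x - t) (by rw [Metric.mem_ball, Real.dist_eq] at hx; exact hx.le)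
  rw [← this]; ring_nf

lemma GoodCurve.mem (hC : ChartFam F C) {γ : ℝ → E} (h : GoodCurve C γ) (t : ℝ) : γ t ∈ F := by
  obtain ⟨c, hc, H⟩ := h t
  have := H 0 (by simp)
  rw [add_zero] at this
  rw [this]
  exact hC.mem c hc 0 (by simp)

lemma ChartFam.step (hC : ChartFam F C) (c : ℝ → E) (hc : c ∈ C) (t : ℝ) (ht : |t| ≤ 2) :
    ∃ d ∈ C, ∀ u : ℝ, |u| ≤ 2 → d u = c (t + u) := by
  obtain ⟨d, hd, h0⟩ := hC.ex (c t) (hC.mem c hc t ht)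
  rcases hC.rig c hc d hd t ht h0 with R | R
  · exact ⟨d, hd, R⟩
  · refine ⟨_, hC.neg d hd, fun u hu => ?_⟩
    have := R (-u) (by rwa [abs_neg])
    simpa using this

lemma int_seq {α : Type*} (R : α → α → Prop) (x : α) (hf : ∀ a, ∃ b, R a b)
    (hb : ∀ a, ∃ b, R b a) : ∃ f : ℤ → α, f 0 = x ∧ ∀ n, R (f n) (f (n + 1)) := by
  choose p hp using hf
  choose q hq using hb
  refine ⟨fun n => match n with
    | Int.ofNat n => p^[n] x
    | Int.negSucc n => q^[n + 1] x, rfl, ?_⟩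
  intro n
  match n with
  | Int.ofNat n =>
    change R (p^[n] x) (p^[n + 1] x)
    rw [Function.iterate_succ_apply']; exact hp _
  | Int.negSucc 0 =>
    change R (q x) x
    exact hq x
  | Int.negSucc (n + 1) =>
    change R (q^[n + 2] x) (q^[n + 1] x)
    rw [Function.iterate_succ_apply']; exact hq _

lemma ChartFam.exists_good (hC : ChartFam F C) (x : E) (hx : x ∈ F) :
    ∃ γ, GoodCurve C γ ∧ γ 0 = x := by
  obtain ⟨c0, hc0, h0⟩ := hC.ex x hx
  obtain ⟨c, hc00, hcs⟩ := int_seq (α := C)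
    (fun c d => ∀ u : ℝ, |u| ≤ 2 → d.1 u = c.1 (1 + u)) ⟨c0, hc0⟩
    (fun a => by
      obtain ⟨d, hd, H⟩ := hC.step a.1 a.2 1 (by norm_num)
      exact ⟨⟨d, hd⟩, H⟩)
    (fun a => by
      obtain ⟨e, he, H⟩ := hC.step a.1 a.2 (-1) (by norm_num)
      refine ⟨⟨e, he⟩, ?_⟩
      rcases hC.rig e he a.1 a.2 1 (by norm_num) (by
        rw [H 1 (by norm_num)]; norm_num) with R | R
      · exact R
      · exfalso
        have e1 := R 1 (by norm_num)
        have e2 := H 0 (by norm_num)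
        rw [sub_self, e2] at e1
        have := hC.inj a.1 a.2 e1
        norm_num at this)
  refine ⟨fun t => (c ⌊t⌋).1 (t - ⌊t⌋), ?_, ?_⟩
  · intro t
    have hf1 := Int.floor_le t
    have hf2 := Int.lt_floor_add_one t
    set n := ⌊t⌋ with hn
    obtain ⟨d, hd, H⟩ := hC.step (c n).1 (c n).2 (t - n) (by
      rw [abs_le]; constructor <;> linarith)
    refine ⟨d, hd, fun u hu => ?_⟩
    rw [H u (by linarith)]
    rw [abs_le] at hu
    have hg1 := Int.floor_le (t + u)
    have hg2 := Int.lt_floor_add_one (t + u)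
    have hm : ⌊t + u⌋ = n ∨ ⌊t + u⌋ = n + 1 ∨ ⌊t + u⌋ + 1 = n := by
      have h1 : ((⌊t + u⌋ : ℤ) : ℝ) < ((n + 2 : ℤ) : ℝ) := by push_cast; linarith
      have h2 : ((n : ℤ) : ℝ) < ((⌊t + u⌋ + 2 : ℤ) : ℝ) := by push_cast; linarith
      have h1' := Int.cast_lt.mp h1
      have h2' := Int.cast_lt.mp h2
      omega
    rcases hm with hm | hm | hm
    · simp only [hm]; ring_nf
    · have h2 : ((⌊t + u⌋ : ℤ) : ℝ) = n + 1 := by rw [hm]; push_cast; ring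
      have := hcs n (t + u - (n + 1)) (by rw [abs_le]; constructor <;> linarith)
      simp only [hm]
      push_cast
      rw [this]; ring_nf
    · have h2 : ((n : ℤ) : ℝ) = ⌊t + u⌋ + 1 := by rw [← hm]; push_cast; ring
      have := hcs ⌊t + u⌋ (t + u - n) (by rw [abs_le]; constructor <;> linarith)
      rw [hm] at this
      have e : t - n + u = t + u - n := by ring
      rw [e, this, h2]; ring_nf
  · simp [hc00, h0]

lemma ChartFam.not_inj (hC : ChartFam F C) (hF : IsCompact F) {γ : ℝ → E} (h : GoodCurve C γ) :
    ∃ s t, s < t ∧ γ s = γ t := by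
  obtain ⟨x, hx, φ, hφ, hlim⟩ := hF.tendsto_subseq (x := fun n : ℕ => γ (3 * (n : ℝ)))
    (fun n => h.mem hC _)
  obtain ⟨d, hd, hd0⟩ := hC.ex x hx
  obtain ⟨ε, hε, H⟩ := hC.nbhd d hd
  rw [hd0] at H
  rw [Metric.tendsto_atTop] at hlim
  obtain ⟨N, hN⟩ := hlim ε hε
  obtain ⟨σ, hσ, e1⟩ := H _ (h.mem hC _) (hN N le_rfl)
  obtain ⟨τ, hτ, e2⟩ := H _ (h.mem hC _) (hN (N + 1) (by omega))
  have hlt : φ N < φ (N + 1) := hφ (Nat.lt_succ_self N)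
  have hlt' : (φ N : ℝ) + 1 ≤ φ (N + 1) := by exact_mod_cast hlt
  obtain ⟨c, hc, Hc⟩ := h (3 * (φ N : ℝ))
  have hc0 := Hc 0 (by simp)
  rw [add_zero] at hc0
  rw [abs_le] at hσ hτ
  have : ∃ u : ℝ, |u| ≤ 1 ∧ c u = d τ := by
    rcases hC.rig d hd c hc σ (by rw [abs_le]; constructor <;> linarith) (by
      rw [← hc0, e1]) with R | R
    · refine ⟨τ - σ, by rw [abs_le]; constructor <;> linarith, ?_⟩
      rw [R _ (by rw [abs_le]; constructor <;> linarith)]; ring_nf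
    · refine ⟨σ - τ, by rw [abs_le]; constructor <;> linarith, ?_⟩
      rw [R _ (by rw [abs_le]; constructor <;> linarith)]; ring_nf
  obtain ⟨u, hu, hcu⟩ := this
  refine ⟨3 * (φ N : ℝ) + u, 3 * (φ (N + 1) : ℝ), ?_, ?_⟩
  · rw [abs_le] at hu; linarith
  · rw [Hc u hu, hcu, e2]

lemma ChartFam.main (hC : ChartFam F C) (hF : IsCompact F) (y : E) (hy : y ∈ F) :
    ∃ (a b : ℝ) (γ : ℝ → E), a < b ∧ ContinuousOn γ (Icc a b) ∧ γ a = γ b ∧ InjOn γ (Ico a b) ∧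
      connectedComponentIn F y = γ '' Icc a b := by
  obtain ⟨γ, h, h0⟩ := hC.exists_good y hy
  have hcont := h.continuous hC
  obtain ⟨s, t, hst, he⟩ := hC.not_inj hF h
  have hloc : ∀ T : ℝ, 0 < T → γ 0 = γ T → 1 ≤ T := by
    intro T hT hγ
    by_contra hlt
    push Not at hlt
    obtain ⟨c, hc, H⟩ := h 0
    have e1 := H 0 (by simp)
    have e2 := H T (by rw [abs_le]; constructor <;> linarith)
    simp only [zero_add] at e1 e2
    rw [e1, e2] at hγ
    exact hT.ne (hC.inj c hc hγ)
  have hT0 : γ 0 = γ (t - s) := by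
    have := h.periodic hC he (-s)
    rw [add_neg_cancel] at this
    rw [this]; ring_nf
  have hcpt : IsCompact (Icc (1 : ℝ) (t - s) ∩ {T | γ 0 = γ T}) :=
    isCompact_Icc.inter_right (isClosed_eq continuous_const hcont)
  obtain ⟨T, ⟨⟨hT1, hT2⟩, hTe⟩, hmin⟩ := hcpt.exists_isLeast
    ⟨t - s, ⟨hloc _ (by linarith) hT0, le_rfl⟩, hT0⟩
  change γ 0 = γ T at hTe
  have hper : ∀ u, γ u = γ (T + u) := by
    intro u
    simpa using h.periodic hC hTe u
  have hPer : Function.Periodic γ T := fun x => by rw [hper x, add_comm]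
  have hTpos : 0 < T := by linarith
  have himg : γ '' Icc 0 T = range γ := by
    have := hPer.image_Icc hTpos 0
    simpa using this
  have hinj : ∀ a b, 0 ≤ a → a < b → b < T → γ a ≠ γ b := by
    intro a b ha hab hb heq
    have e1 := h.periodic hC heq (-a)
    rw [add_neg_cancel] at e1
    have h1 := hloc (b + -a) (by linarith) e1
    have h2 := hmin ⟨⟨h1, by linarith⟩, e1⟩
    linarith
  refine ⟨0, T, γ, hTpos, hcont.continuousOn, hTe, ?_, ?_⟩
  · intro a ha b hb hab
    rcases lt_trichotomy a b with hl | hl | hl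
    · exact absurd hab (hinj a b ha.1 hl hb.2)
    · exact hl
    · exact absurd hab.symm (hinj b a hb.1 hl ha.2)
  · rw [himg]
    apply Subset.antisymm
    · have hcl : IsClosed (range γ) := by
        rw [← himg]; exact (isCompact_Icc.image hcont).isClosed
      have hop : ∀ x ∈ range γ, ∃ ε > 0, F ∩ Metric.ball x ε ⊆ range γ := by
        rintro _ ⟨t, rfl⟩
        obtain ⟨c, hc, H⟩ := h t
        obtain ⟨ε, hε, Hε⟩ := hC.nbhd c hc
        have hc0 := H 0 (by simp)
        rw [add_zero] at hc0
        rw [← hc0] at Hε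
        refine ⟨ε, hε, ?_⟩
        rintro z ⟨hz, hz'⟩
        obtain ⟨u, hu, rfl⟩ := Hε z hz hz'
        exact ⟨t + u, H u (by linarith)⟩
      choose! ε hε Hε using hop
      intro z hz
      by_contra hzn
      have hpc := isPreconnected_connectedComponentIn (F := F) (x := y)
      have hyr : y ∈ range γ := ⟨0, h0⟩
      obtain ⟨w, hw, hw1, hw2⟩ := hpc (⋃ x ∈ range γ, Metric.ball x (ε x)) (range γ)ᶜ
        (isOpen_biUnion fun _ _ => Metric.isOpen_ball) hcl.isOpen_compl
        (fun w hw => by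
          by_cases hwr : w ∈ range γ
          · left
            exact mem_biUnion hwr (Metric.mem_ball_self (hε w hwr))
          · right; exact hwr)
        ⟨y, mem_connectedComponentIn hy, mem_biUnion hyr (Metric.mem_ball_self (hε y hyr))⟩
        ⟨z, hz, hzn⟩
      simp only [mem_iUnion] at hw1
      obtain ⟨x, hx, hwx⟩ := hw1
      exact hw2 (Hε x hx ⟨connectedComponentIn_subset F y hw, hwx⟩)
    · refine (isPreconnected_range hcont).subset_connectedComponentIn ⟨0, h0⟩ ?_
      rintro _ ⟨t, rfl⟩
      exact h.mem hC t
end abstractpart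

abbrev Pl := EuclideanSpace ℝ (Fin 2)

def graphCurve (u v : Pl) (φ : ℝ → ℝ) (s : ℝ) : Pl := s • u + φ s • v

/-- near `y` (radius `ρ`) the set `F` is a Lipschitz graph -/
def LocGraph (F : Set Pl) (y : Pl) (ρ : ℝ) : Prop :=
  ∃ (u v : Pl) (φ : ℝ → ℝ) (L : ℝ), ‖u‖ = 1 ∧ ‖v‖ = 1 ∧ ⟪u, v⟫ = 0 ∧ 0 ≤ L ∧
    (∀ s t : ℝ, |φ s - φ t| ≤ L * |s - t|) ∧
    F ∩ Metric.ball y ρ = range (graphCurve u v φ) ∩ Metric.ball y ρ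

lemma LocGraph.mono {F : Set Pl} {y z : Pl} {ρ r : ℝ} (h : LocGraph F y ρ)
    (hb : Metric.ball z r ⊆ Metric.ball y ρ) : LocGraph F z r := by
  obtain ⟨u, v, φ, L, hu, hv, huv, hL, hφ, he⟩ := h
  refine ⟨u, v, φ, L, hu, hv, huv, hL, hφ, ?_⟩
  rw [← inter_eq_self_of_subset_right hb, ← inter_assoc, he, inter_assoc]

lemma frontier_subgraph (φ : ℝ → ℝ) (hφ : Continuous φ) :
    frontier {p : Pl | p 1 ≤ φ (p 0)} = {p : Pl | p 1 = φ (p 0)} := by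
  apply Subset.antisymm
  · refine frontier_le_subset_eq ?_ ?_ <;> fun_prop
  · intro p hp
    have hp' : p 1 = φ (p 0) := hp
    refine ⟨subset_closure hp'.le, fun hi => ?_⟩
    rw [mem_interior_iff_mem_nhds] at hi
    have ht : Filter.Tendsto (fun ε : ℝ => p + ε • (EuclideanSpace.single 1 1 : Pl))
        (nhds 0) (nhds p) := by
      have : Continuous (fun ε : ℝ => p + ε • (EuclideanSpace.single 1 1 : Pl)) := by fun_prop
      have := this.tendsto 0
      simpa using this
    have h1 := ht.eventually hi
    rw [Metric.eventually_nhds_iff] at h1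
    obtain ⟨ε, hε, H⟩ := h1
    have := @H (ε / 2) (by rw [Real.dist_eq, sub_zero, abs_of_pos] <;> linarith)
    change (p + (ε / 2) • (EuclideanSpace.single 1 1 : Pl)) 1 ≤
      φ ((p + (ε / 2) • (EuclideanSpace.single 1 1 : Pl)) 0) at this
    simp at this
    linarith

lemma locGraph_of_domain {M : Set Pl} (hM : IsLipschitzDomain M) (x : Pl) (hx : x ∈ frontier M) :
    ∃ r > 0, LocGraph (frontier M) x r := by
  obtain ⟨g, r, φ, L, hr, hL, hφ, he⟩ := hM.2 x hx
  have hφc : Continuous φ := by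
    have : LipschitzWith ⟨L, hL⟩ φ := LipschitzWith.of_dist_le_mul fun s t => by
      rw [Real.dist_eq, Real.dist_eq]; exact hφ s t
    exact this.continuous
  have h1 : frontier (g '' M) ∩ Metric.ball (g x) r
      = {p : Pl | p 1 = φ (p 0)} ∩ Metric.ball (g x) r := by
    rw [← frontier_inter_open_inter Metric.isOpen_ball, he,
      frontier_inter_open_inter Metric.isOpen_ball, frontier_subgraph φ hφc]
  have h2 : frontier (g '' M) = g '' frontier M := (g.toHomeomorph.image_frontier M).symm
  let A := g.symm.toRealAffineIsometryEquiv
  let l := A.linearIsometryEquiv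
  have hA : ∀ p, g.symm p = l p + A 0 := by
    intro p
    have : A p = l p + A 0 := by simpa using A.map_vadd 0 p
    rw [← this]; rfl
  set w : Pl := l.symm (A 0) with hw
  have hA' : ∀ p, g.symm p = l (p + w) := by
    intro p; rw [hA, map_add, hw, l.apply_symm_apply]
  let e0 : Pl := EuclideanSpace.single 0 1
  let e1 : Pl := EuclideanSpace.single 1 1
  have hexp : ∀ p : Pl, p = p 0 • e0 + p 1 • e1 := by
    intro p; ext i; fin_cases i <;> simp [e0, e1]
  have hl : ∀ p : Pl, l p = p 0 • l e0 + p 1 • l e1 := by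
    intro p
    conv_lhs => rw [hexp p]
    rw [map_add, map_smul, map_smul]
  have hl' : ∀ p : Pl, g.symm p = (p 0 + w 0) • l e0 + (p 1 + w 1) • l e1 := by
    intro p; rw [hA', hl (p + w)]; rfl
  refine ⟨r, hr, l e0, l e1, fun s => φ (s - w 0) + w 1, L, ?_, ?_, ?_, hL, ?_, ?_⟩
  · simp [e0]
  · simp [e1]
  · rw [l.inner_map_map]; simp [e0, e1, EuclideanSpace.inner_single_left]
  · intro s t
    have := hφ (s - w 0) (t - w 0)
    simpa using this
  · have key : ∀ q : Pl, q ∈ range (graphCurve (l e0) (l e1) fun s => φ (s - w 0) + w 1) ↔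
        (g q) 1 = φ ((g q) 0) := by
      intro q
      constructor
      · rintro ⟨s, rfl⟩
        have : graphCurve (l e0) (l e1) (fun s => φ (s - w 0) + w 1) s
            = g.symm ((s - w 0) • e0 + φ (s - w 0) • e1) := by
          rw [hl', graphCurve]; simp [e0, e1]
        rw [this, g.apply_symm_apply]; simp [e0, e1]
      · intro h
        refine ⟨(g q) 0 + w 0, ?_⟩
        have : q = g.symm (g q) := (g.symm_apply_apply q).symm
        conv_rhs => rw [this]
        rw [hl', graphCurve, add_sub_cancel_right, ← h]
    ext q
    simp only [mem_inter_iff]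
    rw [and_congr_left_iff]
    intro hq
    rw [key]
    have hq' : g q ∈ Metric.ball (g x) r := by
      rw [Metric.mem_ball, g.dist_eq]; exact hq
    have h3 : g q ∈ frontier (g '' M) ∩ Metric.ball (g x) r ↔
        g q ∈ {p : Pl | p 1 = φ (p 0)} ∩ Metric.ball (g x) r := by rw [h1]
    rw [h2] at h3
    constructor
    · intro h
      exact (h3.1 ⟨mem_image_of_mem _ h, hq'⟩).1
    · intro h
      obtain ⟨z, hz, hzq⟩ := (h3.2 ⟨h, hq'⟩).1
      rwa [← g.injective hzq]

lemma locGraph_uniform {M : Set Pl} (hMc : IsCompact M) (hM : IsLipschitzDomain M) :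
    ∃ ρ > 0, ∀ y ∈ frontier M, LocGraph (frontier M) y ρ := by
  have hF : IsCompact (frontier M) :=
    hMc.of_isClosed_subset isClosed_frontier hMc.isClosed.frontier_subset
  choose! r hr H using locGraph_of_domain hM
  obtain ⟨δ, hδ, Hδ⟩ := lebesgue_number_lemma_of_metric (s := frontier M)
    (c := fun i : frontier M => Metric.ball i.1 (r i)) hF (fun _ => Metric.isOpen_ball)
    (fun x hx => mem_iUnion.2 ⟨⟨x, hx⟩, Metric.mem_ball_self (hr x hx)⟩)
  refine ⟨δ, hδ, fun y hy => ?_⟩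
  obtain ⟨i, hi⟩ := Hδ y hy
  exact (H i.1 i.2).mono hi

lemma inner_graphCurve {u v : Pl} (hu : ‖u‖ = 1) (huv : ⟪u, v⟫ = 0) (φ : ℝ → ℝ) (s : ℝ) :
    ⟪graphCurve u v φ s, u⟫ = s := by
  have : ⟪v, u⟫ = 0 := by rw [real_inner_comm]; exact huv
  rw [graphCurve, inner_add_left, real_inner_smul_left, real_inner_smul_left, this,
    real_inner_self_eq_norm_sq, hu]; simp

lemma graph_piece {u v : Pl} {φ : ℝ → ℝ} {L : ℝ} (hu : ‖u‖ = 1) (hv : ‖v‖ = 1)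
    (huv : ⟪u, v⟫ = 0) (hL : 0 ≤ L) (hφ : ∀ s t : ℝ, |φ s - φ t| ≤ L * |s - t|)
    {Q : Set Pl} (hQc : IsCompact Q) (hQ : IsPreconnected Q)
    (hsub : Q ⊆ range (graphCurve u v φ)) : IsLipschitzGraph Q := by
  have hc : Continuous (fun q : Pl => ⟪q, u⟫) := by fun_prop
  have hnorm : ∀ s : ℝ, ⟪s • u, u⟫ = s := by
    intro s; rw [real_inner_smul_left, real_inner_self_eq_norm_sq, hu]; simp
  refine ⟨L + 1, by linarith, v, hv, (fun q : Pl => ⟪q, u⟫ • u) '' Q, fun t => φ ⟪t, u⟫,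
    ?_, ?_, ?_, ?_, ?_⟩
  · exact (hQc.image (by fun_prop)).isClosed
  · have h1 : Convex ℝ ((fun q : Pl => ⟪q, u⟫) '' Q) :=
      (hQ.image _ hc.continuousOn).ordConnected.convex
    have h2 := h1.linear_image (LinearMap.toSpanSingleton ℝ Pl u)
    rw [image_image] at h2
    exact h2
  · rintro _ ⟨q, hq, rfl⟩
    simp only
    rw [real_inner_smul_left, huv, mul_zero]
  · rintro _ ⟨q, hq, rfl⟩ _ ⟨q', hq', rfl⟩
    simp only [hnorm]
    rw [← sub_smul, norm_smul, hu, mul_one, Real.norm_eq_abs]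
    exact (hφ _ _).trans (mul_le_mul_of_nonneg_right (by linarith) (abs_nonneg _))
  · rw [image_image]
    have : ∀ q ∈ Q, ⟪q, u⟫ • u + φ ⟪⟪q, u⟫ • u, u⟫ • v = q := by
      intro q hq
      obtain ⟨s, rfl⟩ := hsub hq
      rw [hnorm, inner_graphCurve hu huv]; rfl
    rw [image_congr this]; simp

lemma part_b {F : Set Pl} {ρ : ℝ} (hρ : 0 < ρ) (hF : ∀ y ∈ F, LocGraph F y ρ)
    (a b : ℝ) (γ : ℝ → Pl) (hab : a < b) (hγ : ContinuousOn γ (Icc a b))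
    (hγF : ∀ t ∈ Icc a b, γ t ∈ F) :
    ∃ (N : ℕ) (t : ℕ → ℝ), t 0 = a ∧ t N = b ∧ (∀ i < N, t i < t (i + 1)) ∧
        ∀ i < N, IsLipschitzGraph (γ '' Icc (t i) (t (i + 1))) := by
  have huc := isCompact_Icc.uniformContinuousOn_of_continuous hγ
  rw [Metric.uniformContinuousOn_iff] at huc
  obtain ⟨δ, hδ, H⟩ := huc ρ hρ
  obtain ⟨N, hN⟩ := exists_nat_gt ((b - a) / δ)
  have hNpos : (0 : ℝ) < N := lt_trans (div_pos (by linarith) hδ) hN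
  have hstep : (b - a) / N < δ := by
    rw [div_lt_iff₀ hδ] at hN
    rw [div_lt_iff₀ hNpos]; linarith
  have hpos : 0 < (b - a) / N := div_pos (by linarith) hNpos
  have hmul : (N : ℝ) * ((b - a) / N) = b - a := by field_simp
  set η := (b - a) / N with hη
  refine ⟨N, fun i => a + i * η, by simp, by simp only [hmul]; ring, ?_, ?_⟩
  · intro i hi; push_cast; linarith
  · intro i hi
    have hi' : (i : ℝ) + 1 ≤ N := by exact_mod_cast hi
    have h0 : (0 : ℝ) ≤ i * η := by positivity
    have h1 : ((i : ℝ) + 1) * η ≤ b - a := by rw [← hmul]; gcongr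
    have hsub : Icc (a + i * η) (a + ((i + 1 : ℕ) : ℝ) * η) ⊆ Icc a b := by
      push_cast
      apply Icc_subset_Icc <;> linarith
    have hm : a + i * η ∈ Icc a b := hsub ⟨le_rfl, by push_cast; linarith⟩
    obtain ⟨u, v, φ, L, hu, hv, huv, hL, hφ, he⟩ := hF _ (hγF _ hm)
    refine graph_piece hu hv huv hL hφ (isCompact_Icc.image_of_continuousOn (hγ.mono hsub))
      (isPreconnected_Icc.image _ (hγ.mono hsub)) ?_
    rintro _ ⟨s, hs, rfl⟩
    have : γ s ∈ F ∩ Metric.ball (γ (a + i * η)) ρ := by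
      refine ⟨hγF _ (hsub hs), H _ (hsub hs) _ hm ?_⟩
      push_cast at hs
      rw [Real.dist_eq, abs_of_nonneg] <;> linarith [hs.1, hs.2]
    rw [he] at this
    exact this.1

def USpeed (c : ℝ → Pl) : Prop :=
  ∀ x y : ℝ, x ≤ y → eVariationOn c (Icc x y) = ENNReal.ofReal (y - x)

lemma USpeed.on {c : ℝ → Pl} (h : USpeed c) {S : Set ℝ} (hS : S.OrdConnected) :
    HasUnitSpeedOn c S := by
  unfold HasUnitSpeedOn
  rw [hasConstantSpeedOnWith_iff_ordered]
  intro x hx y hy hxy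
  rw [inter_eq_self_of_subset_right (hS.out hx hy), h x y hxy]; simp

lemma USpeed.neg {c : ℝ → Pl} (h : USpeed c) : USpeed (fun u => c (-u)) := by
  intro x y hxy
  have := eVariationOn.comp_eq_of_antitoneOn c (t := Icc x y) (fun u : ℝ => -u)
    (fun a _ b _ hab => neg_le_neg hab)
  rw [show (fun u => c (-u)) = c ∘ (fun u : ℝ => -u) from rfl, this]
  rw [show (fun u : ℝ => -u) '' Icc x y = Icc (-y) (-x) by simp]
  rw [h _ _ (by linarith)]; ring_nf

lemma USpeed.shift {c : ℝ → Pl} (h : USpeed c) (t : ℝ) : USpeed (fun u => c (t + u)) := by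
  intro x y hxy
  have := eVariationOn.comp_eq_of_monotoneOn c (t := Icc x y) (fun u : ℝ => t + u)
    (fun a _ b _ hab => by simpa using hab)
  rw [show (fun u => c (t + u)) = c ∘ (fun u : ℝ => t + u) from rfl, this]
  rw [show (fun u : ℝ => t + u) '' Icc x y = Icc (t + x) (t + y) by simp [add_comm]]
  rw [h _ _ (by linarith)]; ring_nf

lemma USpeed.dist_le {c : ℝ → Pl} (h : USpeed c) (x y : ℝ) : dist (c x) (c y) ≤ |x - y| := by
  wlog hxy : x ≤ y generalizing x y
  · rw [dist_comm, abs_sub_comm]; exact this y x (by linarith)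
  have h1 := eVariationOn.edist_le c (s := Icc x y) (left_mem_Icc.2 hxy) (right_mem_Icc.2 hxy)
  rw [h x y hxy, edist_dist] at h1
  rw [abs_sub_comm, abs_of_nonneg (by linarith)]
  exact (ENNReal.ofReal_le_ofReal_iff (by linarith)).1 h1

lemma USpeed.mono_case {c d : ℝ → Pl} (hc : USpeed c) (hd : USpeed d) {a : ℝ} (ha : 0 ≤ a)
    {φ : ℝ → ℝ} (hφc : ContinuousOn φ (Icc (-a) a)) (hφ : MonotoneOn φ (Icc (-a) a))
    (he : ∀ u ∈ Icc (-a) a, c (φ u) = d u) : ∀ u ∈ Icc (-a) a, d u = c (φ 0 + u) := by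
  intro u hu
  have h1 : HasUnitSpeedOn (c ∘ φ) (Icc (-a) a) := by
    have := hd.on (S := Icc (-a) a) ordConnected_Icc
    intro x hx y hy
    rw [← this hx hy]
    exact eVariationOn.eq_of_eqOn fun z hz => he z hz.1
  have h2 : HasUnitSpeedOn c (φ '' Icc (-a) a) :=
    hc.on (isPreconnected_Icc.image _ hφc).ordConnected
  have := unique_unit_speed hφ h1 h2 (x := 0) ⟨by linarith, ha⟩ hu
  simp only [sub_zero] at this
  rw [← he u hu, this, add_comm]

lemma USpeed.rigid {c d : ℝ → Pl} (hc : USpeed c) (hd : USpeed d) {Λ : ℝ} (hΛ : 0 ≤ Λ)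
    (hbl : ∀ s t, |s - t| ≤ Λ * dist (c s) (c t)) (hdi : Function.Injective d)
    {a t : ℝ} (ha : 0 ≤ a) (hsub : ∀ u, |u| ≤ a → d u ∈ range c) (h0 : d 0 = c t) :
    (∀ u, |u| ≤ a → d u = c (t + u)) ∨ (∀ u, |u| ≤ a → d u = c (t - u)) := by
  have hci : Function.Injective c := by
    intro x y hxy
    have := hbl x y
    rw [hxy, dist_self, mul_zero] at this
    have := abs_nonpos_iff.1 this
    linarith
  have hsub' : ∀ u, ∃ s, |u| ≤ a → c s = d u := by
    intro u
    by_cases hu : |u| ≤ a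
    · obtain ⟨s, hs⟩ := hsub u hu; exact ⟨s, fun _ => hs⟩
    · exact ⟨0, fun h => absurd h hu⟩
  choose φ hφ using hsub'
  have he : ∀ u ∈ Icc (-a) a, c (φ u) = d u := fun u hu => hφ u (abs_le.2 hu)
  have hφ0 : φ 0 = t := hci (by rw [hφ 0 (by simpa using ha), h0])
  have hlip : LipschitzOnWith ⟨Λ, hΛ⟩ φ (Icc (-a) a) := by
    refine LipschitzOnWith.of_dist_le_mul fun u hu v hv => ?_
    rw [Real.dist_eq, Real.dist_eq]
    refine (hbl _ _).trans ?_
    rw [he u hu, he v hv]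
    exact mul_le_mul_of_nonneg_left (hd.dist_le u v) hΛ
  have hφc := hlip.continuousOn
  have hinj : InjOn φ (Icc (-a) a) := by
    intro u hu v hv huv
    apply hdi
    rw [← he u hu, ← he v hv, huv]
  rcases hφc.strictMonoOn_of_injOn_Icc' (by linarith) hinj with hm | hm
  · left
    intro u hu
    rw [hc.mono_case hd ha hφc hm.monotoneOn he u (abs_le.1 hu), hφ0]
  · right
    intro u hu
    have := hc.neg.mono_case hd ha hφc.neg (fun x hx y hy hxy => neg_le_neg (hm.antitoneOn hx hy hxy))
      (fun u hu => by simpa using he u hu) u (abs_le.1 hu)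
    rw [this]
    simp only [Pi.neg_apply, hφ0]
    ring_nf

lemma exists_arclength {f : ℝ → Pl} {K : ℝ} (hK : 0 ≤ K)
    (h1 : ∀ s t, |s - t| ≤ dist (f s) (f t)) (h2 : ∀ s t, dist (f s) (f t) ≤ K * |s - t|) :
    ∃ c : ℝ → Pl, USpeed c ∧ range c = range f ∧ ∀ s t, |s - t| ≤ K * dist (c s) (c t) := by
  have hlip : LipschitzWith ⟨K, hK⟩ f := LipschitzWith.of_dist_le_mul fun s t => by
      rw [Real.dist_eq]; exact h2 s t
  have hbv : LocallyBoundedVariationOn f univ := hlip.locallyBoundedVariationOn univ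
  set V := variationOnFromTo f univ 0 with hV
  have hsub : ∀ s t, s ≤ t → V t - V s = (eVariationOn f (Icc s t)).toReal := by
    intro s t hst
    rw [hV, variationOnFromTo.sub_right hbv (mem_univ _) (mem_univ _) (mem_univ _),
      variationOnFromTo.eq_of_le _ _ hst, univ_inter]
  have hfin : ∀ s t, eVariationOn f (Icc s t) ≠ ⊤ := by
    intro s t
    have := hbv s t (mem_univ _) (mem_univ _)
    rwa [univ_inter] at this
  have hlow : ∀ s t, s ≤ t → t - s ≤ V t - V s := by
    intro s t hst
    rw [hsub s t hst]
    have h3 := eVariationOn.edist_le f (s := Icc s t) (left_mem_Icc.2 hst) (right_mem_Icc.2 hst)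
    have h4 := ENNReal.toReal_mono (hfin s t) h3
    rw [edist_dist, ENNReal.toReal_ofReal dist_nonneg] at h4
    have h5 := h1 s t
    rw [abs_sub_comm, abs_of_nonneg (by linarith)] at h5
    linarith
  have hup : ∀ s t, s ≤ t → V t - V s ≤ K * (t - s) := by
    intro s t hst
    rw [hsub s t hst]
    have h3 := hlip.lipschitzOnWith.comp_eVariationOn_le (g := id) (s := Icc s t) (t := univ)
      (mapsTo_univ _ _)
    have h4 : eVariationOn (id : ℝ → ℝ) (Icc s t) ≤ ENNReal.ofReal (t - s) := by
      have := (monotoneOn_id (s := Icc s t)).eVariationOn_eq (left_mem_Icc.2 hst)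
        (right_mem_Icc.2 hst)
      rw [inter_self] at this
      exact this.le
    have h5 : eVariationOn f (Icc s t) ≤ ENNReal.ofReal (K * (t - s)) := by
      refine h3.trans ?_
      rw [ENNReal.ofReal_mul hK]
      refine mul_le_mul' ?_ h4
      rw [ENNReal.ofReal]
      exact le_of_eq (by rw [Real.toNNReal_of_nonneg hK]; rfl)
    exact ENNReal.toReal_le_of_le_ofReal (mul_nonneg hK (by linarith)) h5
  have hupabs : ∀ s t, |V s - V t| ≤ K * |s - t| := by
    intro s t
    rcases le_total s t with h | h
    · rw [abs_sub_comm, abs_sub_comm s, abs_of_nonneg (by linarith [hlow s t h]),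
        abs_of_nonneg (by linarith)]
      exact hup s t h
    · rw [abs_of_nonneg (by linarith [hlow t s h]), abs_of_nonneg (by linarith)]
      exact hup t s h
  have hVc : Continuous V := by
    have : LipschitzWith ⟨K, hK⟩ V := LipschitzWith.of_dist_le_mul fun s t => by
      rw [Real.dist_eq, Real.dist_eq]; exact hupabs s t
    exact this.continuous
  have hV0 : V 0 = 0 := variationOnFromTo.self _ _ _
  have hsurj : Function.Surjective V := by
    refine hVc.surjective ?_ ?_
    · refine Filter.tendsto_atTop_mono' _ ?_ Filter.tendsto_id
      filter_upwards [Filter.eventually_ge_atTop 0] with x hx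
      have := hlow 0 x hx
      simp only [id]; linarith
    · refine Filter.tendsto_atBot_mono' _ ?_ Filter.tendsto_id
      filter_upwards [Filter.eventually_le_atBot 0] with x hx
      have := hlow x 0 hx
      simp only [id]; linarith
  have hcV : ∀ s, naturalParameterization f univ 0 (V s) = f s := by
    intro s
    have := edist_naturalParameterization_eq_zero hbv (mem_univ (0 : ℝ)) (mem_univ s)
    exact edist_eq_zero.1 this
  refine ⟨naturalParameterization f univ 0, ?_, ?_, ?_⟩
  · have := has_unit_speed_naturalParameterization f hbv (mem_univ (0 : ℝ))
    rw [image_univ, hsurj.range_eq] at this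
    intro x y hxy
    have h3 := this (mem_univ x) (mem_univ y)
    simpa using h3
  · rw [← hsurj.range_comp]
    congr 1
    funext s
    exact hcV s
  · intro s t
    obtain ⟨s, rfl⟩ := hsurj s
    obtain ⟨t, rfl⟩ := hsurj t
    rw [hcV, hcV]
    exact (hupabs s t).trans (mul_le_mul_of_nonneg_left (h1 s t) hK)

/-- unit speed chart -/
def UChart (F : Set Pl) (ρ : ℝ) (c : ℝ → Pl) : Prop :=
  USpeed c ∧ (∃ Λ : ℝ, 0 ≤ Λ ∧ ∀ s t, |s - t| ≤ Λ * dist (c s) (c t)) ∧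
    F ∩ Metric.ball (c 0) ρ = range c ∩ Metric.ball (c 0) ρ

lemma UChart.injective {F : Set Pl} {ρ : ℝ} {c : ℝ → Pl} (h : UChart F ρ c) :
    Function.Injective c := by
  obtain ⟨_, ⟨Λ, _, hbl⟩, _⟩ := h
  intro x y hxy
  have := hbl x y
  rw [hxy, dist_self, mul_zero] at this
  have := abs_nonpos_iff.1 this
  linarith

lemma UChart.mem {F : Set Pl} {ρ : ℝ} {c : ℝ → Pl} (h : UChart F ρ c) (u : ℝ) (hu : |u| < ρ) :
    c u ∈ F := by
  have : c u ∈ range c ∩ Metric.ball (c 0) ρ := by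
    refine ⟨⟨u, rfl⟩, ?_⟩
    have := h.1.dist_le u 0
    rw [sub_zero] at this
    rw [Metric.mem_ball]; linarith
  rw [← h.2.2] at this
  exact this.1

lemma LocGraph.uchart {F : Set Pl} {y : Pl} {ρ : ℝ} (hρ : 0 < ρ) (hy : y ∈ F)
    (h : LocGraph F y ρ) : ∃ c, UChart F ρ c ∧ c 0 = y := by
  obtain ⟨u, v, φ, L, hu, hv, huv, hL, hφ, he⟩ := h
  obtain ⟨c, hc, hr, hbl⟩ := exists_arclength (f := graphCurve u v φ) (K := 1 + L) (by linarith)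
    (by
      intro s t
      rw [dist_eq_norm]
      have h1 := abs_real_inner_le_norm (graphCurve u v φ s - graphCurve u v φ t) u
      rw [inner_sub_left, inner_graphCurve hu huv, inner_graphCurve hu huv, hu, mul_one] at h1
      exact h1)
    (by
      intro s t
      rw [dist_eq_norm]
      have : graphCurve u v φ s - graphCurve u v φ t = (s - t) • u + (φ s - φ t) • v := by
        simp only [graphCurve, sub_smul]; abel
      rw [this]
      refine (norm_add_le _ _).trans ?_
      rw [norm_smul, norm_smul, hu, hv, Real.norm_eq_abs, Real.norm_eq_abs]
      have := hφ s t
      linarith)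
  have hyr : y ∈ range c := by
    rw [hr]
    have : y ∈ F ∩ Metric.ball y ρ := ⟨hy, Metric.mem_ball_self hρ⟩
    rw [he] at this
    exact this.1
  obtain ⟨t, rfl⟩ := hyr
  refine ⟨fun u => c (t + u), ⟨hc.shift t, ⟨1 + L, by linarith, fun s s' => ?_⟩, ?_⟩, by simp⟩
  · simpa using hbl (t + s) (t + s')
  · have : range (fun u => c (t + u)) = range c :=
      (Equiv.addLeft t).surjective.range_comp c
    rw [this, hr]; simpa using he

lemma chartFam_of_locGraph {F : Set Pl} {ρ : ℝ} (hρ : 0 < ρ) (hF : ∀ y ∈ F, LocGraph F y ρ) :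
    ChartFam F {e : ℝ → Pl | ∃ c, UChart F ρ c ∧ ∀ u, e u = c (ρ / 5 * u)} where
  cont := by
    rintro e ⟨c, hc, he⟩
    have h1 : LipschitzWith 1 c := LipschitzWith.of_dist_le_mul fun s t => by
      rw [Real.dist_eq]; simpa using hc.1.dist_le s t
    have : e = fun u => c (ρ / 5 * u) := funext he
    rw [this]
    exact h1.continuous.comp (continuous_const.mul continuous_id)
  inj := by
    rintro e ⟨c, hc, he⟩ x y hxy
    rw [he, he] at hxy
    have := hc.injective hxy
    exact mul_left_cancel₀ (by positivity) this
  mem := by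
    rintro e ⟨c, hc, he⟩ u hu
    rw [he]
    apply hc.mem
    rw [abs_mul, abs_of_pos (by positivity)]
    nlinarith
  ex := by
    intro x hx
    obtain ⟨c, hc, h0⟩ := (hF x hx).uchart hρ hx
    exact ⟨_, ⟨c, hc, fun u => rfl⟩, by simpa using h0⟩
  neg := by
    rintro e ⟨c, ⟨hc1, ⟨Λ, hΛ, hbl⟩, hc3⟩, he⟩
    refine ⟨fun u => c (-u), ⟨hc1.neg, ⟨Λ, hΛ, fun s t => ?_⟩, ?_⟩, fun u => ?_⟩
    · have := hbl (-s) (-t)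
      rw [← abs_neg] at this
      simpa [neg_add_eq_sub, abs_sub_comm] using this
    · have : range (fun u => c (-u)) = range c := neg_surjective.range_comp c
      rw [this]; simpa using hc3
    · simp only [he]; ring_nf
  rig := by
    rintro e ⟨c, hc, he⟩ e' ⟨d, hd, he'⟩ t ht h0
    rw [he, he', mul_zero] at h0
    have hp : 0 < ρ / 5 := by positivity
    obtain ⟨hc1, ⟨Λ, hΛ, hbl⟩, hc3⟩ := id hc
    have ht' : |ρ / 5 * t| ≤ ρ / 5 * 2 := by
      rw [abs_mul, abs_of_pos hp]; gcongr
    have := hc1.rigid hd.1 hΛ hbl hd.injective (a := ρ / 5 * 2) (t := ρ / 5 * t) (by positivity)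
      (fun u hu => by
        have h1 : d u ∈ F := hd.mem u (by linarith)
        have h2 : d u ∈ F ∩ Metric.ball (c 0) ρ := by
          refine ⟨h1, ?_⟩
          rw [Metric.mem_ball]
          have h3 := hd.1.dist_le u 0
          have h4 := hc.1.dist_le (ρ / 5 * t) 0
          rw [sub_zero] at h3 h4
          rw [h0] at h3
          have := dist_triangle (d u) (c (ρ / 5 * t)) (c 0)
          linarith
        rw [hc3] at h2
        exact h2.1) h0
    have hs : ∀ u : ℝ, |u| ≤ 2 → |ρ / 5 * u| ≤ ρ / 5 * 2 := fun u hu => by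
      rw [abs_mul, abs_of_pos hp]; gcongr
    rcases this with R | R
    · left
      intro u hu
      rw [he, he', R _ (hs u hu)]; ring_nf
    · right
      intro u hu
      rw [he, he', R _ (hs u hu)]; ring_nf
  nbhd := by
    rintro e ⟨c, hc, he⟩
    obtain ⟨hc1, ⟨Λ, hΛ, hbl⟩, hc3⟩ := id hc
    have hp : 0 < ρ / 5 := by positivity
    refine ⟨min ρ (ρ / 10 / (Λ + 1)), by positivity, fun y hy hyd => ?_⟩
    rw [he, mul_zero] at hyd
    have h2 : y ∈ F ∩ Metric.ball (c 0) ρ := ⟨hy, lt_of_lt_of_le hyd (min_le_left _ _)⟩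
    rw [hc3] at h2
    obtain ⟨s, rfl⟩ := h2.1
    have h3 := lt_of_lt_of_le hyd (min_le_right _ _)
    rw [lt_div_iff₀ (by positivity)] at h3
    have h4 := hbl s 0
    rw [sub_zero] at h4
    have h5 : |s| ≤ ρ / 10 := by nlinarith [dist_nonneg (x := c s) (y := c 0)]
    refine ⟨s / (ρ / 5), ?_, ?_⟩
    · rw [abs_div, abs_of_pos hp, div_le_iff₀ hp]; linarith
    · rw [he, mul_div_cancel₀ _ hp.ne']

/-- For a nonempty compact Lipschitz domain `M ⊆ ℝ²`: (a) every connected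
component of `∂M` is a Jordan curve, and (b) every Jordan curve parametrizing a connected
component of `∂M` admits a partition whose pieces have Lipschitz-graph images. -/
theorem lipschitz_domain_boundary_structure
    (M : Set (EuclideanSpace ℝ (Fin 2))) (hMne : M.Nonempty) (hMc : IsCompact M)
    (hM : IsLipschitzDomain M) :
    (∀ y ∈ frontier M, ∃ (a b : ℝ) (γ : ℝ → EuclideanSpace ℝ (Fin 2)),
      a < b ∧ ContinuousOn γ (Icc a b) ∧ γ a = γ b ∧ InjOn γ (Ico a b) ∧
      connectedComponentIn (frontier M) y = γ '' Icc a b) ∧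
    (∀ (a b : ℝ) (γ : ℝ → EuclideanSpace ℝ (Fin 2)), a < b →
      ContinuousOn γ (Icc a b) → γ a = γ b → InjOn γ (Ico a b) →
      (∃ y ∈ frontier M, γ '' Icc a b = connectedComponentIn (frontier M) y) →
      ∃ (N : ℕ) (t : ℕ → ℝ), t 0 = a ∧ t N = b ∧ (∀ i < N, t i < t (i + 1)) ∧
        ∀ i < N, IsLipschitzGraph (γ '' Icc (t i) (t (i + 1)))) := by
  have hF : IsCompact (frontier M) :=
    hMc.of_isClosed_subset isClosed_frontier hMc.isClosed.frontier_subset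
  obtain ⟨ρ, hρ, H⟩ := locGraph_uniform hMc hM
  refine ⟨fun y hy => (chartFam_of_locGraph hρ H).main hF y hy, ?_⟩
  rintro a b γ hab hγ - - ⟨y, hy, he⟩
  refine part_b hρ H a b γ hab hγ fun t ht => ?_
  have : γ t ∈ γ '' Icc a b := mem_image_of_mem _ ht
  rw [he] at this
  exact connectedComponentIn_subset _ _ this
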